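/- (Theorem 2, non-convex convergence of FedExP, with explicit constants.) Let F_1, …, F_M : ℝ^d → ℝ be differentiable and L-smooth (possibly non-convex), let F = (1/M)Σ_{i=1}^M F_i, let F* = inf F > −∞, and assume the global gradient variance bound (1/M) Σ_{i=1}^M ‖∇F_i(w) − ∇F(w)‖² ≤ σ_g² for all w ∈ ℝ^d. Fix τ ≥ 1 and 0 < η_l ≤ 1/(6τL). Starting from w^{(0)} ∈ ℝ^d, for each round t = 0,…,T−1 define local full-batch gradient descent iterates w_i^{(t,0)} = w^{(t)}, w_i^{(t,k+1)} = w_i^{(t,k)} − η_l ∇F_i(w_i^{(t,k)}) for k = 0,…,τ−1, client updates Δ_i^{(t)} = w^{(t)} − w_i^{(t,τ)}, Δ̄^{(t)} = (1/M)Σ_{i=1}^M Δ_i^{(t)}, and w^{(t+1)} = w^{(t)} − η_g^{(t)} Δ̄^{(t)}, where the server step sizes satisfy η_g^{(t)} ≥ 1 and M η_g^{(t)} ‖Δ̄^{(t)}‖² ≤ Σ_{i=1}^M ‖Δ_i^{(t)}‖² for every t. Then min_{0 ≤ t ≤ T−1} ‖∇F(w^{(t)})‖² ≤ 8(F(w^{(0)})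 − F*) / (η_l τ Σ_{t=0}^{T−1} η_g^{(t)}) + 40 η_l² L² τ(τ−1) σ_g² + 24 η_l L τ σ_g². -/

import Mathlib

section helpers
variable {E : Type*} [NormedAddCommGroup E] [InnerProductSpace ℝ E] [CompleteSpace E]

lemma fedexp_descent (f : E → ℝ) (L : ℝ) (hf : Differentiable ℝ f)
    (hs : ∀ w w', ‖gradient f w - gradient f w'‖ ≤ L * ‖w - w'‖) (w v : E) :
    f (w + v) ≤ f w + inner ℝ (gradient f w) v + L / 2 * ‖v‖ ^ 2 := by
  let φ : ℝ → ℝ := fun s => f (w + s • v) - s * inner ℝ (gradient f w) v - L / 2 * s ^ 2 * ‖v‖ ^ 2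
  have hd : ∀ s, HasDerivAt φ (inner ℝ (gradient f (w + s • v)) v - inner ℝ (gradient f w) v
      - L * s * ‖v‖ ^ 2) s := by
    intro s
    have h1 : HasDerivAt (fun s : ℝ => w + s • v) v s := by
      simpa using ((hasDerivAt_id s).smul_const v).const_add w
    have h2 := (hf (w + s • v)).hasGradientAt.hasFDerivAt.comp_hasDerivAt s h1
    have h3 : HasDerivAt (fun s : ℝ => s * inner ℝ (gradient f w) v) (inner ℝ (gradient f w) v) s := by
      simpa using (hasDerivAt_id s).mul_const (inner ℝ (gradient f w) v)
    have h4 : HasDerivAt (fun s : ℝ => L / 2 * s ^ 2 * ‖v‖ ^ 2) (L * s * ‖v‖ ^ 2) s := by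
      have := (((hasDerivAt_id s).pow 2).const_mul (L / 2)).mul_const (‖v‖ ^ 2)
      refine this.congr_deriv ?_
      simp only [id, Nat.cast_ofNat, Nat.add_one_sub_one, pow_one]
      ring
    have h5 := (h2.sub h3).sub h4
    refine h5.congr_deriv ?_
    rw [InnerProductSpace.toDual_apply_apply]
  have hanti : AntitoneOn φ (Set.Icc 0 1) := by
    apply antitoneOn_of_deriv_nonpos (convex_Icc 0 1)
    · exact fun s _ => (hd s).continuousAt.continuousWithinAt
    · exact fun s _ => (hd s).differentiableAt.differentiableWithinAt
    · intro s hs'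
      rw [interior_Icc] at hs'
      rw [(hd s).deriv, ← inner_sub_left]
      have h1 := real_inner_le_norm (gradient f (w + s • v) - gradient f w) v
      have h2 := hs (w + s • v) w
      rw [add_sub_cancel_left, norm_smul, Real.norm_eq_abs, abs_of_pos hs'.1] at h2
      nlinarith [mul_le_mul_of_nonneg_right h2 (norm_nonneg v)]
  have := hanti (Set.left_mem_Icc.2 zero_le_one) (Set.right_mem_Icc.2 zero_le_one) zero_le_one
  simp only [φ, one_smul, zero_smul, add_zero] at this
  linarith

lemma fedexp_jensen {M : ℕ} (hM : 0 < M) (v : Fin M → E) :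
    ‖(1 / (M : ℝ)) • ∑ i, v i‖ ^ 2 ≤ (1 / (M : ℝ)) * ∑ i, ‖v i‖ ^ 2 := by
  have hM' : (0 : ℝ) < M := by exact_mod_cast hM
  have h1 : ‖∑ i, v i‖ ^ 2 ≤ (∑ i, ‖v i‖) ^ 2 :=
    pow_le_pow_left₀ (norm_nonneg _) (norm_sum_le _ _) 2
  have h2 : (∑ i, ‖v i‖) ^ 2 ≤ (M : ℝ) * ∑ i, ‖v i‖ ^ 2 := by
    simpa using sq_sum_le_card_mul_sum_sq (s := Finset.univ) (f := fun i => ‖v i‖)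
  rw [norm_smul, mul_pow, Real.norm_eq_abs, sq_abs]
  calc (1 / (M : ℝ)) ^ 2 * ‖∑ i, v i‖ ^ 2 ≤ (1 / (M : ℝ)) ^ 2 * ((M : ℝ) * ∑ i, ‖v i‖ ^ 2) := by
        gcongr; exact h1.trans h2
    _ = _ := by field_simp

lemma fedexp_drift (g : E → E) (L η : ℝ) (τ : ℕ) (hL : 0 < L) (hη : 0 < η)
    (hx : η * L * τ ≤ 1 / 6)
    (hs : ∀ w w', ‖g w - g w'‖ ≤ L * ‖w - w'‖) (u : ℕ → E)
    (hu : ∀ k < τ, u (k + 1) = u k - η • g (u k)) :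
    ∀ k ≤ τ, ‖u k - u 0‖ ≤ 6 / 5 * k * η * ‖g (u 0)‖ ∧
      ‖(u 0 - u k) - (k * η) • g (u 0)‖ ≤ 3 / 5 * η ^ 2 * L * ‖g (u 0)‖ * (k * (k - 1)) := by
  intro k
  induction k with
  | zero => intro _; simp
  | succ k ih =>
    intro hk
    obtain ⟨h1, h2⟩ := ih (by omega)
    have hG := norm_nonneg (g (u 0))
    have h3 := hs (u k) (u 0)
    have h4 : ‖g (u k) - g (u 0)‖ ≤ 6 / 5 * k * η * L * ‖g (u 0)‖ := by
      nlinarith [mul_le_mul_of_nonneg_left h1 hL.le]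
    have hkx : η * L * k ≤ 1 / 6 := by
      have : (k : ℝ) ≤ τ := by exact_mod_cast (by omega : k ≤ τ)
      nlinarith [mul_pos hη hL]
    have h5 : ‖g (u k)‖ ≤ 6 / 5 * ‖g (u 0)‖ := by
      have := norm_le_norm_add_norm_sub (g (u 0)) (g (u k))
      rw [norm_sub_rev] at this
      nlinarith [mul_le_mul_of_nonneg_right hkx hG]
    rw [hu k (by omega)]
    push_cast
    constructor
    · have : u k - η • g (u k) - u 0 = (u k - u 0) - η • g (u k) := by abel
      rw [this]
      have h6 := norm_sub_le (u k - u 0) (η • g (u k))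
      rw [norm_smul, Real.norm_eq_abs, abs_of_pos hη] at h6
      nlinarith [mul_le_mul_of_nonneg_left h5 hη.le]
    · have : u 0 - (u k - η • g (u k)) - ((k + 1 : ℝ) * η) • g (u 0) =
          ((u 0 - u k) - (k * η) • g (u 0)) + η • (g (u k) - g (u 0)) := by
        module
      rw [this]
      have h6 := norm_add_le ((u 0 - u k) - (k * η) • g (u 0)) (η • (g (u k) - g (u 0)))
      rw [norm_smul, Real.norm_eq_abs, abs_of_pos hη] at h6
      nlinarith [mul_le_mul_of_nonneg_left h4 hη.le]

lemma fedexp_sq_add (a b : E) : ‖a + b‖ ^ 2 ≤ 2 * ‖a‖ ^ 2 + 2 * ‖b‖ ^ 2 := by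
  have := pow_le_pow_left₀ (norm_nonneg _) (norm_add_le a b) 2
  nlinarith [sq_nonneg (‖a‖ - ‖b‖)]

end helpers

lemma fedexp_scalar (L c eta N s P Q EE I B z y δ A : ℝ) (hc : 0 < c) (he : 1 ≤ eta)
    (hL : 0 < L) (hs : 0 ≤ s) (hN : 0 ≤ N) (hy : y = L * c) (hy6 : y ≤ 1 / 6)
    (hδ0 : 0 ≤ δ) (hδ : δ ≤ 36 / 100 * z) (hz : z ≤ 1 / 36)
    (hP : P ≤ 2 * s + 2 * N) (hE : EE ≤ c ^ 2 * δ * P) (hQ : Q ≤ 2 * EE + 2 * c ^ 2 * P)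
    (hI : 2 * c * I ≥ c ^ 2 * N - EE) (hB : eta * B ≤ Q)
    (hA : A ≤ - (eta * I) + L / 2 * (eta ^ 2 * B)) :
    A ≤ eta * c * (-N / 8 + 5 * z * s + 3 * y * s) := by
  have hy0 : 0 < y := by rw [hy]; positivity
  have hI' : I ≥ c * (N / 2 - δ * P / 2) := by
    have : c * (2 * I) ≥ c * (c * (N - δ * P)) := by nlinarith
    have := le_of_mul_le_mul_left this hc
    linarith
  have h1 : eta * B ≤ c ^ 2 * (2 * δ * P + 2 * P) := by nlinarith
  have h2 : L / 2 * (eta * B) ≤ c * (y * (δ * P + P)) := by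
    have := mul_le_mul_of_nonneg_left h1 (by positivity : 0 ≤ L / 2)
    rw [hy]; nlinarith
  have h3 : (δ / 2 + y * δ + y) * P ≤ (δ / 2 + y * δ + y) * (2 * s + 2 * N) :=
    mul_le_mul_of_nonneg_left hP (by positivity)
  have h4 : (δ / 2 + y * δ + y) ≤ 2 / 3 * δ + y := by nlinarith
  have h5 : (δ / 2 + y * δ + y) * (2 * s + 2 * N) ≤ (2 / 3 * δ + y) * (2 * s + 2 * N) :=
    mul_le_mul_of_nonneg_right h4 (by positivity)
  have hz0 : 0 ≤ z := by linarith
  have h6 : (2 / 3 * δ + y) * (2 * N) ≤ 3 / 8 * N := by nlinarith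
  have h7 : (2 / 3 * δ + y) * (2 * s) ≤ 5 * z * s + 3 * y * s := by
    have : 2 * (2 / 3 * δ + y) ≤ 5 * z + 3 * y := by linarith
    nlinarith
  have h8 : -I + L / 2 * (eta * B) ≤ c * (-N / 8 + 5 * z * s + 3 * y * s) := by
    have : -N / 2 + (δ / 2 + y * δ + y) * P ≤ -N / 8 + 5 * z * s + 3 * y * s := by linarith
    have := mul_le_mul_of_nonneg_left this hc.le
    linarith
  have := mul_le_mul_of_nonneg_left h8 (by linarith : 0 ≤ eta)
  linarith

/-- Theorem 2: convergence of FedExP for (possibly non-convex) smooth objectives,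
with explicit constants. -/
theorem fedexp_nonconvex_convergence {d M : ℕ} (hM : 0 < M)
    (F : Fin M → EuclideanSpace ℝ (Fin d) → ℝ)
    (Fbar : EuclideanSpace ℝ (Fin d) → ℝ)
    (hFbar : ∀ w, Fbar w = (1 / (M : ℝ)) * ∑ i, F i w)
    (L ηl σg Fstar : ℝ) (τ T : ℕ) (hτ : 1 ≤ τ) (hT : 0 < T)
    (hdiff : ∀ i, Differentiable ℝ (F i))
    (hsmooth : ∀ i, ∀ w w' : EuclideanSpace ℝ (Fin d),
      ‖gradient (F i) w - gradient (F i) w'‖ ≤ L * ‖w - w'‖)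
    (hFstar : IsGLB (Set.range Fbar) Fstar)
    (hσg : ∀ w : EuclideanSpace ℝ (Fin d),
      (1 / (M : ℝ)) * ∑ i, ‖gradient (F i) w - gradient Fbar w‖ ^ 2 ≤ σg ^ 2)
    (hηl : 0 < ηl) (hηlL : ηl ≤ 1 / (6 * τ * L))
    (w : ℕ → EuclideanSpace ℝ (Fin d))
    (wloc : ℕ → Fin M → ℕ → EuclideanSpace ℝ (Fin d))
    (hwloc0 : ∀ t < T, ∀ i, wloc t i 0 = w t)
    (hwlocrec : ∀ t < T, ∀ i, ∀ k < τ,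
      wloc t i (k + 1) = wloc t i k - ηl • gradient (F i) (wloc t i k))
    (Δ : ℕ → Fin M → EuclideanSpace ℝ (Fin d))
    (hΔ : ∀ t < T, ∀ i, Δ t i = w t - wloc t i τ)
    (Δbar : ℕ → EuclideanSpace ℝ (Fin d))
    (hΔbar : ∀ t < T, Δbar t = (1 / (M : ℝ)) • ∑ i, Δ t i)
    (ηg : ℕ → ℝ) (hηg1 : ∀ t < T, 1 ≤ ηg t)
    (hηgub : ∀ t < T, (M : ℝ) * ηg t * ‖Δbar t‖ ^ 2 ≤ ∑ i, ‖Δ t i‖ ^ 2)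
    (hwrec : ∀ t < T, w (t + 1) = w t - ηg t • Δbar t) :
    ∃ t < T, ‖gradient Fbar (w t)‖ ^ 2 ≤
      8 * (Fbar (w 0) - Fstar) / (ηl * τ * ∑ t ∈ Finset.range T, ηg t)
        + 40 * ηl ^ 2 * L ^ 2 * τ * (τ - 1) * σg ^ 2
        + 24 * ηl * L * τ * σg ^ 2 := by
  have hM' : (0 : ℝ) < M := by exact_mod_cast hM
  have hτ1 : (1 : ℝ) ≤ τ := by exact_mod_cast hτ
  have hτ' : (0 : ℝ) < τ := by linarith
  have hL : 0 < L := by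
    by_contra h
    push Not at h
    have : 1 / (6 * (τ : ℝ) * L) ≤ 0 :=
      div_nonpos_of_nonneg_of_nonpos zero_le_one (by nlinarith)
    linarith
  have hx : ηl * L * τ ≤ 1 / 6 := by
    rw [le_div_iff₀ (by positivity)] at hηlL
    linarith
  have hFbar' : Fbar = fun w => (1 / (M : ℝ)) * ∑ i, F i w := funext hFbar
  have hgrad : ∀ w, HasGradientAt Fbar ((1 / (M : ℝ)) • ∑ i, gradient (F i) w) w := by
    intro w
    rw [hasGradientAt_iff_hasFDerivAt, hFbar', map_smulₛₗ, map_sum]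
    have := (HasFDerivAt.fun_sum (u := Finset.univ)
      (fun i _ => (hdiff i w).hasGradientAt.hasFDerivAt)).const_mul (1 / (M : ℝ))
    simpa using this
  have hgb : ∀ w, gradient Fbar w = (1 / (M : ℝ)) • ∑ i, gradient (F i) w :=
    fun w => (hgrad w).gradient
  have hbs : ∀ w w', ‖gradient Fbar w - gradient Fbar w'‖ ≤ L * ‖w - w'‖ := by
    intro w w'
    rw [hgb, hgb, ← smul_sub, ← Finset.sum_sub_distrib, norm_smul, Real.norm_eq_abs,
      abs_of_pos (by positivity)]
    calc (1 / (M : ℝ)) * ‖∑ i, (gradient (F i) w - gradient (F i) w')‖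
        ≤ (1 / (M : ℝ)) * ∑ i : Fin M, L * ‖w - w'‖ := by
          gcongr
          exact norm_sum_le_of_le _ (fun i _ => hsmooth i w w')
      _ = _ := by simp; field_simp
  have hround : ∀ t < T, Fbar (w (t + 1)) - Fbar (w t) ≤ ηg t * (ηl * τ) *
      (-‖gradient Fbar (w t)‖ ^ 2 / 8 + 5 * (ηl ^ 2 * L ^ 2 * τ * (τ - 1)) * σg ^ 2
        + 3 * (ηl * L * τ) * σg ^ 2) := by
    intro t ht
    have hc : 0 < ηl * τ := by positivity
    have hpt : ∀ i, ‖Δ t i - (ηl * τ) • gradient (F i) (w t)‖ ^ 2 ≤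
        (ηl * τ) ^ 2 * (36 / 100 * (ηl * L * (τ - 1)) ^ 2) * ‖gradient (F i) (w t)‖ ^ 2 := by
      intro i
      have h := (fedexp_drift (gradient (F i)) L ηl τ hL hηl hx (hsmooth i) (wloc t i)
        (hwlocrec t ht i) τ le_rfl).2
      rw [hwloc0 t ht i, ← hΔ t ht i, mul_comm (τ : ℝ) ηl] at h
      refine (pow_le_pow_left₀ (norm_nonneg _) h 2).trans (le_of_eq ?_)
      ring
    have hE : (1 / (M : ℝ)) * ∑ i, ‖Δ t i - (ηl * τ) • gradient (F i) (w t)‖ ^ 2 ≤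
        (ηl * τ) ^ 2 * (36 / 100 * (ηl * L * (τ - 1)) ^ 2) *
          ((1 / (M : ℝ)) * ∑ i, ‖gradient (F i) (w t)‖ ^ 2) := by
      rw [mul_left_comm, Finset.mul_sum (a := (ηl * τ) ^ 2 * (36 / 100 * (ηl * L * (τ - 1)) ^ 2))]
      gcongr with i
      exact hpt i
    have hP : (1 / (M : ℝ)) * ∑ i, ‖gradient (F i) (w t)‖ ^ 2 ≤
        2 * σg ^ 2 + 2 * ‖gradient Fbar (w t)‖ ^ 2 := by
      have h1 : ∑ i, ‖gradient (F i) (w t)‖ ^ 2 ≤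
          ∑ i, (2 * ‖gradient (F i) (w t) - gradient Fbar (w t)‖ ^ 2 +
            2 * ‖gradient Fbar (w t)‖ ^ 2) := by
        gcongr with i
        simpa using fedexp_sq_add (gradient (F i) (w t) - gradient Fbar (w t))
          (gradient Fbar (w t))
      rw [Finset.sum_add_distrib, ← Finset.mul_sum] at h1
      simp only [Finset.sum_const, Finset.card_univ, Fintype.card_fin, nsmul_eq_mul] at h1
      have h2 := mul_le_mul_of_nonneg_left h1 (by positivity : 0 ≤ 1 / (M : ℝ))
      have h3 : 1 / (M : ℝ) * ((M : ℝ) * (2 * ‖gradient Fbar (w t)‖ ^ 2)) =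
        2 * ‖gradient Fbar (w t)‖ ^ 2 := by field_simp
      rw [mul_add, h3] at h2
      linarith [hσg (w t)]
    have hQ : (1 / (M : ℝ)) * ∑ i, ‖Δ t i‖ ^ 2 ≤
        2 * ((1 / (M : ℝ)) * ∑ i, ‖Δ t i - (ηl * τ) • gradient (F i) (w t)‖ ^ 2) +
        2 * (ηl * τ) ^ 2 * ((1 / (M : ℝ)) * ∑ i, ‖gradient (F i) (w t)‖ ^ 2) := by
      have h1 : ∑ i, ‖Δ t i‖ ^ 2 ≤
          ∑ i, (2 * ‖Δ t i - (ηl * τ) • gradient (F i) (w t)‖ ^ 2 +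
            2 * (ηl * τ) ^ 2 * ‖gradient (F i) (w t)‖ ^ 2) := by
        gcongr with i
        have := fedexp_sq_add (Δ t i - (ηl * τ) • gradient (F i) (w t))
          ((ηl * τ) • gradient (F i) (w t))
        rw [norm_smul, mul_pow, Real.norm_eq_abs, sq_abs, sub_add_cancel] at this
        linarith
      rw [Finset.sum_add_distrib, ← Finset.mul_sum, ← Finset.mul_sum] at h1
      have h2 := mul_le_mul_of_nonneg_left h1 (by positivity : 0 ≤ 1 / (M : ℝ))
      linarith
    have hJ : ‖Δbar t - (ηl * τ) • gradient Fbar (w t)‖ ^ 2 ≤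
        (1 / (M : ℝ)) * ∑ i, ‖Δ t i - (ηl * τ) • gradient (F i) (w t)‖ ^ 2 := by
      have := fedexp_jensen hM (fun i => Δ t i - (ηl * τ) • gradient (F i) (w t))
      have h2 : Δbar t - (ηl * τ) • gradient Fbar (w t) =
          (1 / (M : ℝ)) • ∑ i, (Δ t i - (ηl * τ) • gradient (F i) (w t)) := by
        rw [hΔbar t ht, hgb, Finset.sum_sub_distrib, smul_sub, ← Finset.smul_sum,
          smul_comm (ηl * (τ : ℝ))]
      rw [h2]
      exact this
    have hI : 2 * (ηl * τ) * inner ℝ (gradient Fbar (w t)) (Δbar t) ≥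
        (ηl * τ) ^ 2 * ‖gradient Fbar (w t)‖ ^ 2 -
        (1 / (M : ℝ)) * ∑ i, ‖Δ t i - (ηl * τ) • gradient (F i) (w t)‖ ^ 2 := by
      rw [norm_sub_sq_real, norm_smul, mul_pow, Real.norm_eq_abs, sq_abs, inner_smul_right,
        real_inner_comm] at hJ
      nlinarith [sq_nonneg ‖Δbar t‖]
    have hB : ηg t * ‖Δbar t‖ ^ 2 ≤ (1 / (M : ℝ)) * ∑ i, ‖Δ t i‖ ^ 2 := by
      have h2 := mul_le_mul_of_nonneg_left (hηgub t ht) (by positivity : 0 ≤ 1 / (M : ℝ))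
      refine le_trans (le_of_eq ?_) h2
      field_simp
    have hA : Fbar (w (t + 1)) - Fbar (w t) ≤
        - (ηg t * inner ℝ (gradient Fbar (w t)) (Δbar t)) + L / 2 * (ηg t ^ 2 * ‖Δbar t‖ ^ 2) := by
      have := fedexp_descent Fbar L (fun w => (hgrad w).differentiableAt) hbs (w t)
        (-(ηg t • Δbar t))
      rw [← sub_eq_add_neg, ← hwrec t ht, inner_neg_right, inner_smul_right, norm_neg, norm_smul,
        mul_pow, Real.norm_eq_abs, sq_abs] at this
      linarith
    have hz : ηl ^ 2 * L ^ 2 * τ * (τ - 1) ≤ 1 / 36 := by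
      have h1 : (ηl * L * τ) ^ 2 ≤ (1 / 6) ^ 2 := pow_le_pow_left₀ (by positivity) hx 2
      have h2 : 0 ≤ ηl ^ 2 * L ^ 2 * τ := by positivity
      nlinarith
    refine fedexp_scalar L (ηl * τ) (ηg t) _ _ _ _ _ _ _ _ (ηl * L * τ) _ _ hc (hηg1 t ht) hL
      (sq_nonneg _) (sq_nonneg _) (by ring) hx (by positivity) ?_ hz hP hE hQ hI hB hA
    have h2 : 0 ≤ ηl ^ 2 * L ^ 2 * (τ - 1) := by
      have : (0 : ℝ) ≤ τ - 1 := by linarith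
      positivity
    nlinarith
  by_contra hcon
  push Not at hcon
  set S := ∑ t ∈ Finset.range T, ηg t with hS
  have hSpos : 0 < S := Finset.sum_pos
    (fun t ht => by linarith [hηg1 t (Finset.mem_range.1 ht)]) (by simpa using hT.ne')
  set A := 8 * (Fbar (w 0) - Fstar) / (ηl * τ * S) with hAdef
  have hstep : ∀ t ∈ Finset.range T, Fbar (w (t + 1)) - Fbar (w t) <
      ηg t * (ηl * τ * (-A / 8)) := by
    intro t ht
    have ht' := Finset.mem_range.1 ht
    have h1 := hcon t ht'
    have h0 : 0 < ηg t * (ηl * τ) :=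
      mul_pos (by linarith [hηg1 t ht']) (by positivity)
    refine (hround t ht').trans_lt ?_
    rw [← mul_assoc (ηg t) (ηl * τ)]
    apply mul_lt_mul_of_pos_left _ h0
    linarith
  have hsum := Finset.sum_lt_sum_of_nonempty (by simpa using hT.ne') hstep
  rw [Finset.sum_range_sub (fun t => Fbar (w t)), ← Finset.sum_mul, ← hS] at hsum
  have h1 : S * (ηl * τ * (-A / 8)) = -(Fbar (w 0) - Fstar) := by
    rw [hAdef]; field_simp
  have h2 : Fstar ≤ Fbar (w T) := hFstar.1 ⟨w T, rfl⟩
  linarith
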